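/- Suppose δ_□(W_{Q_n},W)→0 for some W∈𝒲, limsup_{n→∞}‖W_{Q_n}‖_{qΔ}<∞ for some q∈(1,∞], the tail assumption (T) holds for some p ≥ v, and 1/p+1/q ≤ 1. Fix θ∈ℝ such that T_{W,φ}(F_θ) is a singleton and Z is differentiable at θ, and let t = Z′(θ). Then the set of minimizers of D(ν|ρ) over {ν∈𝒯ℳ : D(ν|ρ)<∞, T_{W,φ}(ν)=t} equals F_θ. -/

import Mathlib

open MeasureTheory Filter Set
open scoped ENNReal NNReal

noncomputable section

/-- The uniform probability measure on `[0,1]`. -/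
def unif01 : Measure ℝ := volume.restrict (Set.Icc 0 1)

instance : IsProbabilityMeasure unif01 :=
  ⟨by rw [unif01, Measure.restrict_apply_univ, Real.volume_Icc]; norm_num⟩

/-- The `L^r` norm (`r : ℝ≥0∞`) of a kernel, viewed as a function on `[0,1]²`. -/
def kerNorm (W : ℝ → ℝ → ℝ) (r : ℝ≥0∞) : ℝ≥0∞ :=
  eLpNorm (fun z : ℝ × ℝ => W z.1 z.2) r (unif01.prod unif01)

/-- The (strong) cut distance `d_□` between two kernels on `[0,1]²`. -/
def cutDist (W₁ W₂ : ℝ → ℝ → ℝ) : ℝ :=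
  ⨆ S : {S : Set ℝ // MeasurableSet S}, ⨆ T : {T : Set ℝ // MeasurableSet T},
    |∫ x in Set.Icc (0:ℝ) 1 ∩ S.1, ∫ y in Set.Icc (0:ℝ) 1 ∩ T.1, (W₁ x y - W₂ x y)|

/-- A Lebesgue-measure-preserving bijection of `[0,1]`. -/
def MPB (σ : ℝ → ℝ) : Prop :=
  Set.BijOn σ (Set.Icc 0 1) (Set.Icc 0 1) ∧ MeasurePreserving σ unif01 unif01

/-- The weak cut distance `δ_□`. -/
def weakCutDist (W₁ W₂ : ℝ → ℝ → ℝ) : ℝ :=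
  ⨅ σ : {σ : ℝ → ℝ // MPB σ}, cutDist (fun x y => W₁ (σ.1 x) (σ.1 y)) W₂

/-- The step kernel `W_{Q_n}` associated to an `n × n` matrix `Q`:
it equals `Q i j` when `⌈n x⌉ = i, ⌈n y⌉ = j`. -/
def stepKernel (n : ℕ) (Q : Fin n → Fin n → ℝ) : ℝ → ℝ → ℝ := fun x y =>
  ∑ i : Fin n, ∑ j : Fin n,
    if x ∈ Set.Ioc (((i : ℕ) : ℝ)/n) ((((i : ℕ) : ℝ)+1)/n) ∧
       y ∈ Set.Ioc (((j : ℕ) : ℝ)/n) ((((j : ℕ) : ℝ)+1)/n)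
    then Q i j else 0

/-- Product over the edges of `H` (each edge counted once) of `f a b`. -/
def edgeProd {v : ℕ} (G : SimpleGraph (Fin v)) [DecidableRel G.Adj]
    (f : Fin v → Fin v → ℝ) : ℝ :=
  ∏ p ∈ Finset.univ.filter (fun p : Fin v × Fin v => G.Adj p.1 p.2 ∧ p.1 < p.2), f p.1 p.2

/-- The number of edges `|E(H)|`. -/
def edgeCard {v : ℕ} (G : SimpleGraph (Fin v)) [DecidableRel G.Adj] : ℕ :=
  (Finset.univ.filter (fun p : Fin v × Fin v => G.Adj p.1 p.2 ∧ p.1 < p.2)).card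

/-- The inhomogeneous U-statistic `U_n(X)` (sum over distinct indices). -/
def Ustat {X : Type*} {v : ℕ} (G : SimpleGraph (Fin v)) [DecidableRel G.Adj]
    (φ : (Fin v → X) → ℝ) (n : ℕ) (Q : Fin n → Fin n → ℝ) (x : Fin n → X) : ℝ :=
  (∑ i ∈ Finset.univ.filter (fun i : Fin v → Fin n => Function.Injective i),
      φ (x ∘ i) * edgeProd G (fun a b => Q (i a) (i b))) / (n : ℝ) ^ v

/-- The inhomogeneous V-statistic `V_n(X)` (sum over all indices). -/
def Vstat {X : Type*} {v : ℕ} (G : SimpleGraph (Fin v)) [DecidableRel G.Adj]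
    (φ : (Fin v → X) → ℝ) (n : ℕ) (Q : Fin n → Fin n → ℝ) (x : Fin n → X) : ℝ :=
  (∑ i : Fin v → Fin n, φ (x ∘ i) * edgeProd G (fun a b => Q (i a) (i b))) / (n : ℝ) ^ v

open Classical in
/-- Kullback-Leibler divergence `D(ν | ρ) ∈ [0,∞]`. -/
def KLdiv {α : Type*} [MeasurableSpace α] (ν ρ : Measure α) : ℝ≥0∞ :=
  if ν ≪ ρ ∧ Integrable (llr ν ρ) ν then ENNReal.ofReal (∫ a, llr ν ρ a ∂ν) else ⊤

open Classical in
/-- `ν` itself if it is a probability measure, junk value `0` otherwise. -/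
def probOr {α : Type*} [MeasurableSpace α] (ν : Measure α) : Measure α :=
  if IsProbabilityMeasure ν then ν else 0

instance {α : Type*} [MeasurableSpace α] (ν : Measure α) : SigmaFinite (probOr ν) := by
  unfold probOr
  split_ifs with h
  · haveI := h; infer_instance
  · infer_instance

/-- `v`-fold product of a (probability) measure. -/
def piProb {α : Type*} [MeasurableSpace α] (v : ℕ) (ν : Measure α) : Measure (Fin v → α) :=
  Measure.pi fun _ => probOr ν

/-- The functional `T_{W,φ}(ν) = E[φ(B₁,…,B_v) ∏_{(a,b) ∈ E(H)} W(A_a,A_b)]`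
for `(A_a,B_a)` i.i.d. with law `ν`. -/
def TWphi {X : Type*} [MeasurableSpace X] {v : ℕ} (G : SimpleGraph (Fin v))
    [DecidableRel G.Adj] (W : ℝ → ℝ → ℝ) (φ : (Fin v → X) → ℝ)
    (ν : Measure (ℝ × X)) : ℝ :=
  ∫ z : Fin v → ℝ × X,
    φ (fun a => (z a).2) * edgeProd G (fun a b => W (z a).1 (z b).1) ∂(piProb v ν)

/-- Membership in `𝒯ℳ`: probability measures on `[0,1] × 𝒳` whose first marginal
is uniform on `[0,1]`. -/
def inTM {X : Type*} [MeasurableSpace X] (ν : Measure (ℝ × X)) : Prop :=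
  IsProbabilityMeasure ν ∧ ν.map Prod.fst = unif01

/-- The rate function `I₀(t) = inf { D(ν|ρ) : ν ∈ 𝒯ℳ, D(ν|ρ) < ∞, T_{W,φ}(ν) = t }`. -/
def rate0 {X : Type*} [MeasurableSpace X] {v : ℕ} (G : SimpleGraph (Fin v))
    [DecidableRel G.Adj] (W : ℝ → ℝ → ℝ) (φ : (Fin v → X) → ℝ) (μ : Measure X)
    (t : ℝ) : ℝ≥0∞ :=
  ⨅ ν : {ν : Measure (ℝ × X) //
      inTM ν ∧ KLdiv ν (unif01.prod μ) ≠ ⊤ ∧ TWphi G W φ ν = t},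
    KLdiv ν.1 (unif01.prod μ)

/-- Tail assumption (T): `E_μ[e^{λ ψ(X)^p}] < ∞` for all `λ > 0`; for `p = ∞`
it means `ψ` is bounded. -/
def TailCond {X : Type*} [MeasurableSpace X] (μ : Measure X) (ψ : X → ℝ)
    (p : ℝ≥0∞) : Prop :=
  if p = ⊤ then ∃ C : ℝ, ∀ x, ψ x ≤ C
  else ∀ lam : ℝ, 0 < lam →
    ∫⁻ x, ENNReal.ofReal (Real.exp (lam * ψ x ^ p.toReal)) ∂μ < ⊤

/-- A sequence of random elements `T n` defined on probability spaces `(Ω n, P n)`,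
taking values in a topological space `E`, satisfies a large deviation principle at
speed `n` with good rate function `I`. -/
def SatisfiesLDP {E : Type*} [TopologicalSpace E] {Ω : ℕ → Type*}
    [∀ n, MeasurableSpace (Ω n)] (P : ∀ n, Measure (Ω n)) (T : ∀ n, Ω n → E)
    (I : E → ℝ≥0∞) : Prop :=
  (∀ c : ℝ≥0∞, c ≠ ⊤ → IsCompact {x | I x ≤ c}) ∧
  ∀ F : Set E, MeasurableSet[borel E] F →
    (-(⨅ x ∈ interior F, (I x : EReal)) ≤
      Filter.atTop.liminf fun n : ℕ =>
        (((n : ℝ)⁻¹ : ℝ) : EReal) * ENNReal.log (P n {ω | T n ω ∈ F})) ∧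
    (Filter.atTop.limsup (fun n : ℕ =>
        (((n : ℝ)⁻¹ : ℝ) : EReal) * ENNReal.log (P n {ω | T n ω ∈ F})) ≤
      -(⨅ x ∈ closure F, (I x : EReal)))

end
/-- The log-normalizing constant `Z_n(θ) = (1/n) log E_{μ^{⊗n}}[e^{nθ f_n(X)}]`. -/
noncomputable def ZnGen {X : Type*} [MeasurableSpace X] (μ : Measure X)
    [IsProbabilityMeasure μ] (f : ∀ n : ℕ, (Fin n → X) → ℝ) (n : ℕ) (θ : ℝ) : ℝ :=
  (n : ℝ)⁻¹ *
    Real.log (∫ x, Real.exp (n * θ * f n x) ∂(Measure.pi fun _ : Fin n => μ))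

/-- The Gibbs measure `R_{n,θ}` with Hamiltonian `f n`, having density
`exp(nθ f_n(x) − n Z_n(θ))` with respect to `μ^{⊗n}`. -/
noncomputable def GibbsMeasure {X : Type*} [MeasurableSpace X] (μ : Measure X)
    [IsProbabilityMeasure μ] (f : ∀ n : ℕ, (Fin n → X) → ℝ) (n : ℕ) (θ : ℝ) :
    Measure (Fin n → X) :=
  (Measure.pi fun _ : Fin n => μ).withDensity fun x =>
    ENNReal.ofReal (Real.exp (n * θ * f n x - n * ZnGen μ f n θ))

/-- The set `{θ T_{W,φ}(ν) − D(ν|ρ) : ν ∈ 𝒯ℳ, D(ν|ρ) < ∞}` whose supremum is `Z(θ)`. -/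
def Zset {X : Type*} [MeasurableSpace X] {v : ℕ} (G : SimpleGraph (Fin v))
    [DecidableRel G.Adj] (W : ℝ → ℝ → ℝ) (φ : (Fin v → X) → ℝ) (μ : Measure X)
    (θ : ℝ) : Set ℝ :=
  {z : ℝ | ∃ ν : Measure (ℝ × X), inTM ν ∧ KLdiv ν (unif01.prod μ) ≠ ⊤ ∧
    z = θ * TWphi G W φ ν - (KLdiv ν (unif01.prod μ)).toReal}
/-- The bivariate empirical measure `𝔏_n = (1/n) Σ_{i=1}^n δ_{(i/n, X_i)}`. -/
noncomputable def empMeas {X : Type*} [MeasurableSpace X] (n : ℕ) (x : Fin n → X) :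
    Measure (ℝ × X) :=
  (n : ℝ≥0∞)⁻¹ • ∑ i : Fin n, Measure.dirac ((((i : ℕ) : ℝ) + 1) / n, x i)

open Classical in
/-- Bundle a measure as a probability measure, with a default value in the junk case. -/
noncomputable def toProb {α : Type*} [MeasurableSpace α] (d : ProbabilityMeasure α)
    (ν : Measure α) : ProbabilityMeasure α :=
  if h : IsProbabilityMeasure ν then ⟨ν, h⟩ else d

/-- `ρ = Unif[0,1] ⊗ μ` as a probability measure. -/
noncomputable def rhoP {X : Type*} [MeasurableSpace X] (μ : Measure X)
    [IsProbabilityMeasure μ] : ProbabilityMeasure (ℝ × X) :=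
  ⟨unif01.prod μ, inferInstance⟩

/-- The bounded-Lipschitz distance `d_l` between two measures on `[0,1] × 𝒳`. -/
noncomputable def dBL {X : Type*} [MeasurableSpace X] [MetricSpace X]
    (ν₁ ν₂ : Measure (ℝ × X)) : ℝ :=
  ⨆ f : {f : ℝ × X → ℝ // LipschitzWith 1 f ∧ ∀ z, f z ∈ Set.Icc (-1 : ℝ) 1},
    |∫ z, f.1 z ∂ν₁ - ∫ z, f.1 z ∂ν₂|

/-- Distance from a measure to a set of measures, in the metric `d_l`. -/
noncomputable def dBLSet {X : Type*} [MeasurableSpace X] [MetricSpace X]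
    (ν : Measure (ℝ × X)) (F : Set (Measure (ℝ × X))) : ℝ :=
  ⨅ σ : F, dBL ν σ.1

/-- The set `F_θ` of maximizers of `ν ↦ θ T_{W,φ}(ν) − D(ν|ρ)` over
`{ν ∈ 𝒯ℳ : D(ν|ρ) < ∞}`. -/
def Fset {X : Type*} [MeasurableSpace X] {v : ℕ} (G : SimpleGraph (Fin v))
    [DecidableRel G.Adj] (W : ℝ → ℝ → ℝ) (φ : (Fin v → X) → ℝ) (μ : Measure X)
    (θ : ℝ) : Set (Measure (ℝ × X)) :=
  {ν | inTM ν ∧ KLdiv ν (unif01.prod μ) ≠ ⊤ ∧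
    ∀ σ : Measure (ℝ × X), inTM σ → KLdiv σ (unif01.prod μ) ≠ ⊤ →
      θ * TWphi G W φ σ - (KLdiv σ (unif01.prod μ)).toReal ≤
        θ * TWphi G W φ ν - (KLdiv ν (unif01.prod μ)).toReal}

open Classical in
/-- The rate function `I_θ(ν) = D(ν|ρ) − θ T_{W,φ}(ν) − inf_σ {D(σ|ρ) − θ T_{W,φ}(σ)}`,
extended by `+∞` outside `{ν ∈ 𝒯ℳ : D(ν|ρ) < ∞}`. -/
noncomputable def Itheta {X : Type*} [MeasurableSpace X] {v : ℕ}
    (G : SimpleGraph (Fin v)) [DecidableRel G.Adj] (W : ℝ → ℝ → ℝ)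
    (φ : (Fin v → X) → ℝ) (μ : Measure X) (θ : ℝ) (ν : Measure (ℝ × X)) : ℝ≥0∞ :=
  if inTM ν ∧ KLdiv ν (unif01.prod μ) ≠ ⊤ then
    ENNReal.ofReal ((KLdiv ν (unif01.prod μ)).toReal - θ * TWphi G W φ ν -
      sInf {z : ℝ | ∃ σ : Measure (ℝ × X), inTM σ ∧ KLdiv σ (unif01.prod μ) ≠ ⊤ ∧
        z = (KLdiv σ (unif01.prod μ)).toReal - θ * TWphi G W φ σ})
  else ⊤
/-- The limiting log-normalizing constant `Z(θ) = sup {θ T_{W,φ}(ν) − D(ν|ρ)}`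
as a function of `θ`. -/
noncomputable def Zfun {X : Type*} [MeasurableSpace X] {v : ℕ} (G : SimpleGraph (Fin v))
    [DecidableRel G.Adj] (W : ℝ → ℝ → ℝ) (φ : (Fin v → X) → ℝ) (μ : Measure X) :
    ℝ → ℝ :=
  fun θ => sSup (Zset G W φ μ θ)

/-- One-variable Hölder step. -/
theorem holder_step {ι α : Type*} [MeasurableSpace α] (m : Measure α) [IsProbabilityMeasure m]
    (E J : Finset ι) (hJE : J ⊆ E) (d : ℕ) (hd : 0 < d) (hJ : J.card ≤ d)
    (g : ι → α → ℝ≥0∞) (hg : ∀ e, Measurable (g e))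
    (c : ι → ℝ≥0∞) (hc : ∀ e ∈ E, e ∉ J → ∀ y, g e y = c e) :
    ∫⁻ y, ∏ e ∈ E, g e y ^ ((d : ℝ)⁻¹) ∂m ≤ ∏ e ∈ E, (∫⁻ y, g e y ∂m) ^ ((d : ℝ)⁻¹) := by
  classical
  have hd' : (0 : ℝ) < d := by exact_mod_cast hd
  have h1 : ∀ y, ∏ e ∈ E, g e y ^ ((d : ℝ)⁻¹) =
      (∏ e ∈ E \ J, c e ^ ((d : ℝ)⁻¹)) * ∏ e ∈ J, g e y ^ ((d : ℝ)⁻¹) := by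
    intro y
    rw [← Finset.prod_sdiff hJE]
    congr 1
    refine Finset.prod_congr rfl fun e he => ?_
    rw [Finset.mem_sdiff] at he
    rw [hc e he.1 he.2]
  have h2 : ∏ e ∈ E, (∫⁻ y, g e y ∂m) ^ ((d : ℝ)⁻¹) =
      (∏ e ∈ E \ J, c e ^ ((d : ℝ)⁻¹)) * ∏ e ∈ J, (∫⁻ y, g e y ∂m) ^ ((d : ℝ)⁻¹) := by
    rw [← Finset.prod_sdiff hJE]
    congr 1
    refine Finset.prod_congr rfl fun e he => ?_
    rw [Finset.mem_sdiff] at he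
    simp [hc e he.1 he.2]
  rw [h2]
  simp_rw [h1]
  rw [lintegral_const_mul _ (Finset.measurable_prod _ fun e _ => (hg e).pow_const _)]
  gcongr
  have h3 := ENNReal.lintegral_mul_prod_norm_pow_le (μ := m) J (g := fun _ => 1) (f := g)
    aemeasurable_const (fun e _ => (hg e).aemeasurable) (q := 1 - J.card * (d : ℝ)⁻¹)
    (p := fun _ => (d : ℝ)⁻¹) (by simp)
    (by
      have : (J.card : ℝ) ≤ d := by exact_mod_cast hJ
      rw [sub_nonneg, ← div_eq_mul_inv, div_le_one hd']
      exact this) (fun _ _ => by positivity)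
  simpa using h3

/-- Finner's inequality. -/
theorem finner {ι δ α : Type*} [DecidableEq δ] [MeasurableSpace α] (m : Measure α)
    [IsProbabilityMeasure m]
    (E : Finset ι) (d : ℕ) (hd : 0 < d) (dep : δ → Finset ι) (hsub : ∀ i, dep i ⊆ E)
    (hcard : ∀ i, (dep i).card ≤ d)
    (f : ι → (δ → α) → ℝ≥0∞) (hf : ∀ e, Measurable (f e))
    (hdep : ∀ i, ∀ e ∈ E, e ∉ dep i → ∀ x y, f e (Function.update x i y) = f e x)
    (s : Finset δ) (x : δ → α) :
    lmarginal (fun _ => m) s (fun x => ∏ e ∈ E, f e x ^ ((d : ℝ)⁻¹)) x ≤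
      ∏ e ∈ E, (lmarginal (fun _ => m) s (f e) x) ^ ((d : ℝ)⁻¹) := by
  induction s using Finset.induction generalizing x with
  | empty => simp
  | insert i s hi ih =>
    rw [lmarginal_insert _ (Finset.measurable_prod _ fun e _ => (hf e).pow_const _) hi]
    simp_rw [lmarginal_insert _ (hf _) hi]
    refine (lintegral_mono fun y => ih _).trans ?_
    refine holder_step m E (dep i) (hsub i) d hd (hcard i)
      (fun e y => lmarginal (fun _ => m) s (f e) (Function.update x i y))
      (fun e => ((hf e).lmarginal _).comp (measurable_update x))
      (fun e => lmarginal (fun _ => m) s (f e) x) ?_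
    intro e he hei y
    rw [lmarginal_update_of_notMem (hf e) hi]
    congr 1
    ext z
    exact hdep i e he hei _ _

theorem young_exp (f s : ℝ) (hf : 0 ≤ f) : s * f ≤ f * Real.log f - f + Real.exp s := by
  rcases hf.eq_or_lt with h | h
  · subst h; simp; positivity
  · have := Real.add_one_le_exp (s - Real.log f)
    rw [Real.exp_sub, Real.exp_log h, le_div_iff₀ h] at this
    nlinarith

/-- Donsker–Varadhan type bound. -/
theorem dv_bound {α : Type*} [MeasurableSpace α] (ν ρ : Measure α) [IsProbabilityMeasure ν]
    [IsProbabilityMeasure ρ] (hKL : KLdiv ν ρ ≠ ⊤) (h : α → ℝ) (hm : Measurable h)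
    (h0 : ∀ x, 0 ≤ h x) (hexp : Integrable (fun x => Real.exp (h x)) ρ) :
    Integrable h ν ∧ ∫ x, h x ∂ν ≤ (KLdiv ν ρ).toReal + ∫ x, Real.exp (h x) ∂ρ := by
  unfold KLdiv at hKL ⊢
  split_ifs at hKL ⊢ with hc
  swap
  · simp at hKL
  obtain ⟨hac, hint⟩ := hc
  have hi1 : Integrable (fun x => (ν.rnDeriv ρ x).toReal * Real.log (ν.rnDeriv ρ x).toReal) ρ :=
    (integrable_rnDeriv_mul_log_iff hac).2 hint
  have hi2 : Integrable (fun x => (ν.rnDeriv ρ x).toReal) ρ := Measure.integrable_toReal_rnDeriv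
  have hb : Integrable (fun x => (ν.rnDeriv ρ x).toReal * Real.log (ν.rnDeriv ρ x).toReal -
      (ν.rnDeriv ρ x).toReal + Real.exp (h x)) ρ := (hi1.sub hi2).add hexp
  have hle : ∀ x, (ν.rnDeriv ρ x).toReal * h x ≤
      (ν.rnDeriv ρ x).toReal * Real.log (ν.rnDeriv ρ x).toReal -
      (ν.rnDeriv ρ x).toReal + Real.exp (h x) := fun x => by
    rw [mul_comm]; exact young_exp _ _ ENNReal.toReal_nonneg
  have hi3 : Integrable (fun x => (ν.rnDeriv ρ x).toReal * h x) ρ := by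
    refine hb.mono' ?_ (Eventually.of_forall fun x => ?_)
    · exact ((Measure.measurable_rnDeriv ν ρ).ennreal_toReal.mul hm).aestronglyMeasurable
    · rw [Real.norm_of_nonneg (mul_nonneg ENNReal.toReal_nonneg (h0 x))]
      exact hle x
  refine ⟨(integrable_rnDeriv_smul_iff hac).1 (by simpa [smul_eq_mul] using hi3), ?_⟩
  rw [← integral_rnDeriv_smul hac]
  simp only [smul_eq_mul]
  refine (integral_mono hi3 hb hle).trans ?_
  have hadd := integral_add (hi1.sub hi2) hexp
  simp only [Pi.sub_apply] at hadd
  rw [hadd]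
  gcongr
  rw [integral_sub hi1 hi2, integral_rnDeriv_mul_log hac]
  have : 0 ≤ ∫ x, (ν.rnDeriv ρ x).toReal ∂ρ := integral_nonneg fun _ => ENNReal.toReal_nonneg
  have := le_max_left (∫ a, llr ν ρ a ∂ν) 0
  rw [ENNReal.toReal_ofReal']
  linarith

theorem lsc_core (F : ℝ × ℝ → ℝ) (hF : LocallyIntegrable F volume) (Fn : ℕ → ℝ × ℝ → ℝ)
    (hFn : ∀ n, Measurable (Fn n))
    (hconv : ∀ (z : ℝ × ℝ) (ε : ℝ), Tendsto (fun n => ∫ w in Metric.closedBall z ε, Fn n w) atTop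
      (nhds (∫ w in Metric.closedBall z ε, F w)))
    (r : ℝ) (hr : 1 ≤ r) (C : ℝ≥0∞) (hC : ∀ᶠ n in atTop, ∫⁻ w, ‖Fn n w‖ₑ ^ r ≤ C) :
    ∫⁻ w, ‖F w‖ₑ ^ r ≤ C := by
  have hr0 : 0 < r := by linarith
  let ε : ℕ → ℝ := fun k => 1 / ((k : ℝ) + 1)
  have hε : ∀ k, 0 < ε k := fun k => by positivity
  let V : ℕ → ℝ≥0∞ := fun k => volume (Metric.closedBall (0 : ℝ × ℝ) (ε k))
  have hV0 : ∀ k, V k ≠ 0 := fun k => (Metric.measure_closedBall_pos _ _ (hε k)).ne'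
  have hVt : ∀ k, V k ≠ ⊤ := fun k => measure_closedBall_lt_top.ne
  have hVz : ∀ k (z : ℝ × ℝ), volume (Metric.closedBall z (ε k)) = V k := fun k z => by
    exact Measure.addHaar_closedBall_center volume z (ε k)
  let K : ℕ → ℕ → (ℝ × ℝ) × (ℝ × ℝ) → ℝ≥0∞ := fun k n =>
    Set.indicator {p | dist p.2 p.1 ≤ ε k} (fun p => ‖Fn n p.2‖ₑ ^ r)
  have hK : ∀ k n, Measurable (K k n) := fun k n =>
    Measurable.indicator (((hFn n).comp measurable_snd).enorm.pow_const _)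
      (measurableSet_le (measurable_snd.dist measurable_fst) measurable_const)
  have hKB : ∀ k n z, ∫⁻ w, K k n (z, w) = ∫⁻ w in Metric.closedBall z (ε k), ‖Fn n w‖ₑ ^ r := by
    intro k n z
    rw [← lintegral_indicator Metric.isClosed_closedBall.measurableSet]
    rfl
  let g : ℕ → ℕ → ℝ × ℝ → ℝ≥0∞ := fun k n z => (V k)⁻¹ * ∫⁻ w, K k n (z, w)
  have hg : ∀ k n, Measurable (g k n) := fun k n =>
    (Measurable.lintegral_prod_right' (hK k n)).const_mul _
  have hgint : ∀ k n, ∫⁻ z, g k n z = ∫⁻ w, ‖Fn n w‖ₑ ^ r := by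
    intro k n
    simp only [g]
    rw [lintegral_const_mul _ (Measurable.lintegral_prod_right' (hK k n)),
      lintegral_lintegral_swap (f := fun z w => K k n (z, w)) (hK k n).aemeasurable]
    have : ∀ w, ∫⁻ z, K k n (z, w) = V k * ‖Fn n w‖ₑ ^ r := by
      intro w
      have h1 : ∀ z, K k n (z, w) =
          Set.indicator (Metric.closedBall w (ε k)) (fun _ => ‖Fn n w‖ₑ ^ r) z := by
        intro z
        by_cases hz : dist w z ≤ ε k
        · rw [Set.indicator_of_mem (Metric.mem_closedBall'.2 hz)]
          exact Set.indicator_of_mem (s := {p : (ℝ × ℝ) × (ℝ × ℝ) | dist p.2 p.1 ≤ ε k}) hz _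
        · rw [Set.indicator_of_notMem (fun h => hz (Metric.mem_closedBall'.1 h))]
          exact Set.indicator_of_notMem
            (s := {p : (ℝ × ℝ) × (ℝ × ℝ) | dist p.2 p.1 ≤ ε k}) hz _
      simp_rw [h1]
      rw [lintegral_indicator_const Metric.isClosed_closedBall.measurableSet, hVz, mul_comm]
    simp_rw [this]
    rw [lintegral_const_mul _ ((hFn n).enorm.pow_const _), ← mul_assoc,
      ENNReal.inv_mul_cancel (hV0 k) (hVt k), one_mul]
  have hjensen : ∀ k n z, ‖⨍ w in Metric.closedBall z (ε k), Fn n w‖ₑ ^ r ≤ g k n z := by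
    intro k n z
    have hp : IsProbabilityMeasure
        ((V k)⁻¹ • (volume.restrict (Metric.closedBall z (ε k)))) := by
      constructor
      simp only [Measure.smul_apply, Measure.restrict_apply_univ, smul_eq_mul, hVz]
      exact ENNReal.inv_mul_cancel (hV0 k) (hVt k)
    have e1 : ⨍ w in Metric.closedBall z (ε k), Fn n w =
        ∫ w, Fn n w ∂((V k)⁻¹ • (volume.restrict (Metric.closedBall z (ε k)))) := by
      rw [average, Measure.restrict_apply_univ, hVz]
    rw [e1]
    have e2 := eLpNorm'_le_eLpNorm'_of_exponent_le one_pos hr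
      ((V k)⁻¹ • (volume.restrict (Metric.closedBall z (ε k)))) (f := Fn n)
      (hFn n).aestronglyMeasurable
    have e3 : g k n z = (eLpNorm' (Fn n) r
      ((V k)⁻¹ • (volume.restrict (Metric.closedBall z (ε k))))) ^ r := by
      rw [eLpNorm', ← ENNReal.rpow_mul, one_div, inv_mul_cancel₀ hr0.ne', ENNReal.rpow_one,
        lintegral_smul_measure, smul_eq_mul, ← hKB]
    rw [e3]
    refine ENNReal.rpow_le_rpow (le_trans ?_ e2) hr0.le
    refine (enorm_integral_le_lintegral_enorm _).trans_eq ?_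
    simp [eLpNorm']
  have hA : ∀ k z, ‖⨍ w in Metric.closedBall z (ε k), F w‖ₑ ^ r ≤
      liminf (fun n => g k n z) atTop := by
    intro k z
    have ht : Tendsto (fun n => ‖⨍ w in Metric.closedBall z (ε k), Fn n w‖ₑ ^ r) atTop
        (nhds (‖⨍ w in Metric.closedBall z (ε k), F w‖ₑ ^ r)) := by
      have h1 : Tendsto (fun n => ⨍ w in Metric.closedBall z (ε k), Fn n w) atTop
        (nhds (⨍ w in Metric.closedBall z (ε k), F w)) := by
        simp only [setAverage_eq]
        exact (hconv z (ε k)).const_smul _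
      exact (ENNReal.continuous_rpow_const.tendsto _).comp
        ((continuous_enorm.tendsto _).comp h1)
    rw [← ht.liminf_eq]
    exact liminf_le_liminf (Eventually.of_forall fun n => hjensen k n z)
  have hB : ∀ᵐ z, ‖F z‖ₑ ^ r ≤ liminf (fun k => liminf (fun n => g k n z) atTop) atTop := by
    filter_upwards [IsUnifLocDoublingMeasure.ae_tendsto_average (volume : Measure (ℝ × ℝ)) hF 1]
      with z hz
    have h1 : Tendsto (fun k => ⨍ w in Metric.closedBall z (ε k), F w) atTop (nhds (F z)) := by
      refine hz (fun _ => z) ε ?_ (Eventually.of_forall fun k => ?_)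
      · exact tendsto_nhdsWithin_iff.2 ⟨tendsto_one_div_add_atTop_nhds_zero_nat,
          Eventually.of_forall fun k => hε k⟩
      · exact Metric.mem_closedBall_self (by have := hε k; linarith)
    have h2 : Tendsto (fun k => ‖⨍ w in Metric.closedBall z (ε k), F w‖ₑ ^ r) atTop
        (nhds (‖F z‖ₑ ^ r)) :=
      (ENNReal.continuous_rpow_const.tendsto _).comp ((continuous_enorm.tendsto _).comp h1)
    rw [← h2.liminf_eq]
    exact liminf_le_liminf (Eventually.of_forall fun k => hA k z)
  refine (lintegral_mono_ae hB).trans ?_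
  refine (lintegral_liminf_le fun k => Measurable.liminf fun n => hg k n).trans ?_
  have hD : ∀ k, ∫⁻ z, liminf (fun n => g k n z) atTop ≤ C := by
    intro k
    refine (lintegral_liminf_le fun n => hg k n).trans ?_
    simp_rw [hgint]
    refine (liminf_le_liminf (v := fun _ => C) hC).trans ?_
    simp
  refine (liminf_le_liminf (v := fun _ => C) (Eventually.of_forall hD)).trans ?_
  simp

theorem unif01_prod : unif01.prod unif01 =
    (volume : Measure (ℝ × ℝ)).restrict (Set.Icc (0:ℝ) 1 ×ˢ Set.Icc (0:ℝ) 1) := by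
  rw [unif01, Measure.prod_restrict, ← Measure.volume_eq_prod]

theorem iter_eq (D : ℝ → ℝ → ℝ)
    (hD : Integrable (fun z : ℝ × ℝ => D z.1 z.2) (unif01.prod unif01)) (S T : Set ℝ)
    (hS : MeasurableSet S) (hT : MeasurableSet T) :
    ∫ x in Set.Icc (0:ℝ) 1 ∩ S, ∫ y in Set.Icc (0:ℝ) 1 ∩ T, D x y =
      ∫ z in S ×ˢ T, D z.1 z.2 ∂(unif01.prod unif01) := by
  rw [unif01_prod, Measure.restrict_restrict (hS.prod hT), Set.prod_inter_prod,
    Set.inter_comm S, Set.inter_comm T, Measure.volume_eq_prod, setIntegral_prod]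
  rw [unif01_prod] at hD
  refine IntegrableOn.mono_set hD ?_
  exact Set.prod_mono Set.inter_subset_left Set.inter_subset_left

theorem abs_rect_le (D : ℝ → ℝ → ℝ)
    (hD : Integrable (fun z : ℝ × ℝ => D z.1 z.2) (unif01.prod unif01)) (S T : Set ℝ)
    (hS : MeasurableSet S) (hT : MeasurableSet T) :
    |∫ x in Set.Icc (0:ℝ) 1 ∩ S, ∫ y in Set.Icc (0:ℝ) 1 ∩ T, D x y| ≤
      ∫ z, ‖D z.1 z.2‖ ∂(unif01.prod unif01) := by
  rw [iter_eq D hD S T hS hT, ← Real.norm_eq_abs]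
  refine (norm_integral_le_integral_norm _).trans ?_
  exact setIntegral_le_integral hD.norm (Eventually.of_forall fun _ => norm_nonneg _)

theorem rect_le_cutDist (U W : ℝ → ℝ → ℝ)
    (hU : Integrable (fun z : ℝ × ℝ => U z.1 z.2) (unif01.prod unif01))
    (hW : Integrable (fun z : ℝ × ℝ => W z.1 z.2) (unif01.prod unif01)) (S T : Set ℝ)
    (hS : MeasurableSet S) (hT : MeasurableSet T) :
    |∫ z in S ×ˢ T, U z.1 z.2 ∂(unif01.prod unif01) -
      ∫ z in S ×ˢ T, W z.1 z.2 ∂(unif01.prod unif01)| ≤ cutDist U W := by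
  have hD : Integrable (fun z : ℝ × ℝ => U z.1 z.2 - W z.1 z.2) (unif01.prod unif01) := hU.sub hW
  rw [← integral_sub hU.integrableOn hW.integrableOn,
    ← iter_eq (fun x y => U x y - W x y) hD S T hS hT]
  have hb := abs_rect_le (fun x y => U x y - W x y) hD
  unfold cutDist
  refine le_trans ?_ (le_ciSup (ι := {S : Set ℝ // MeasurableSet S}) ?_ ⟨S, hS⟩)
  · refine le_ciSup (f := fun T : {T : Set ℝ // MeasurableSet T} =>
      |∫ x in Set.Icc (0:ℝ) 1 ∩ S, ∫ y in Set.Icc (0:ℝ) 1 ∩ T.1, (U x y - W x y)|) ?_ ⟨T, hT⟩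
    refine ⟨∫ z, ‖U z.1 z.2 - W z.1 z.2‖ ∂(unif01.prod unif01), ?_⟩
    · rintro _ ⟨T', rfl⟩
      exact hb S T'.1 hS T'.2
  · refine ⟨∫ z, ‖U z.1 z.2 - W z.1 z.2‖ ∂(unif01.prod unif01), ?_⟩
    · rintro _ ⟨S', rfl⟩
      have : Nonempty {T : Set ℝ // MeasurableSet T} := ⟨⟨∅, MeasurableSet.empty⟩⟩
      exact ciSup_le fun T' => hb S'.1 T'.1 S'.2 T'.2

theorem measurable_stepKernel (n : ℕ) (Q : Fin n → Fin n → ℝ) :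
    Measurable (fun z : ℝ × ℝ => stepKernel n Q z.1 z.2) := by
  unfold stepKernel
  refine Finset.measurable_sum _ fun i _ => Finset.measurable_sum _ fun j _ => ?_
  refine Measurable.ite ?_ measurable_const measurable_const
  exact (measurable_fst measurableSet_Ioc).inter (measurable_snd measurableSet_Ioc)

theorem stepKernel_bdd (n : ℕ) (Q : Fin n → Fin n → ℝ) (x y : ℝ) :
    ‖stepKernel n Q x y‖ ≤ ∑ i : Fin n, ∑ j : Fin n, ‖Q i j‖ := by
  unfold stepKernel
  refine (norm_sum_le _ _).trans (Finset.sum_le_sum fun i _ => ?_)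
  refine (norm_sum_le _ _).trans (Finset.sum_le_sum fun j _ => ?_)
  split_ifs <;> simp

set_option maxHeartbeats 1000000 in
theorem kerNorm_lsc (Q : ∀ n : ℕ, Fin n → Fin n → ℝ)
    (W : ℝ → ℝ → ℝ) (hWmeas : Measurable (Function.uncurry W)) (hWL1 : kerNorm W 1 ≠ ⊤)
    (hcut : Tendsto (fun n => weakCutDist (stepKernel n (Q n)) W) atTop (nhds 0))
    (r : ℝ) (hr : 1 ≤ r)
    (C : ℝ≥0∞) (hC : ∀ᶠ n in atTop,
      ∫⁻ z, ‖stepKernel n (Q n) z.1 z.2‖ₑ ^ r ∂(unif01.prod unif01) ≤ C) :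
    ∫⁻ z, ‖W z.1 z.2‖ₑ ^ r ∂(unif01.prod unif01) ≤ C := by
  have hWm : Measurable (fun z : ℝ × ℝ => W z.1 z.2) := hWmeas
  have hWi : Integrable (fun z : ℝ × ℝ => W z.1 z.2) (unif01.prod unif01) := by
    rw [← memLp_one_iff_integrable]
    exact ⟨hWm.aestronglyMeasurable, lt_top_iff_ne_top.2 hWL1⟩
  have hne : Nonempty {σ : ℝ → ℝ // MPB σ} :=
    ⟨⟨id, Set.bijOn_id _, MeasurePreserving.id _⟩⟩
  have hex : ∀ n : ℕ, ∃ σ : {σ : ℝ → ℝ // MPB σ},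
      cutDist (fun x y => stepKernel n (Q n) (σ.1 x) (σ.1 y)) W <
        weakCutDist (stepKernel n (Q n)) W + 1 / ((n : ℝ) + 1) := by
    intro n
    apply exists_lt_of_ciInf_lt
    exact lt_add_of_pos_right _ (by positivity)
  choose σ hσ using hex
  let U : ℕ → ℝ → ℝ → ℝ := fun n x y => stepKernel n (Q n) ((σ n).1 x) ((σ n).1 y)
  have hmp : ∀ n, MeasurePreserving (Prod.map (σ n).1 (σ n).1)
      (unif01.prod unif01) (unif01.prod unif01) := fun n => (σ n).2.2.prod (σ n).2.2
  have hUm : ∀ n, Measurable (fun z : ℝ × ℝ => U n z.1 z.2) := fun n =>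
    (measurable_stepKernel n (Q n)).comp (hmp n).measurable
  have hUi : ∀ n, Integrable (fun z : ℝ × ℝ => U n z.1 z.2) (unif01.prod unif01) := fun n =>
    Integrable.of_bound (hUm n).aestronglyMeasurable (∑ i : Fin n, ∑ j : Fin n, ‖Q n i j‖)
      (Eventually.of_forall fun z => stepKernel_bdd n (Q n) _ _)
  have hUr : ∀ n, ∫⁻ z, ‖U n z.1 z.2‖ₑ ^ r ∂(unif01.prod unif01) =
      ∫⁻ z, ‖stepKernel n (Q n) z.1 z.2‖ₑ ^ r ∂(unif01.prod unif01) := fun n =>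
    (hmp n).lintegral_comp (f := fun z => ‖stepKernel n (Q n) z.1 z.2‖ₑ ^ r)
      ((measurable_stepKernel n (Q n)).enorm.pow_const _)
  have hrect : ∀ S T : Set ℝ, MeasurableSet S → MeasurableSet T →
      Tendsto (fun n => ∫ z in S ×ˢ T, U n z.1 z.2 ∂(unif01.prod unif01)) atTop
        (nhds (∫ z in S ×ˢ T, W z.1 z.2 ∂(unif01.prod unif01))) := by
    intro S T hS hT
    rw [tendsto_iff_norm_sub_tendsto_zero]
    have hlim : Tendsto (fun n : ℕ => weakCutDist (stepKernel n (Q n)) W + 1 / ((n : ℝ) + 1))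
        atTop (nhds 0) := by
      simpa using hcut.add tendsto_one_div_add_atTop_nhds_zero_nat
    refine squeeze_zero (fun _ => norm_nonneg _) (fun n => ?_) hlim
    exact (rect_le_cutDist (U n) W (hUi n) hWi S T hS hT).trans (hσ n).le
  have hsq : MeasurableSet (Set.Icc (0:ℝ) 1 ×ˢ Set.Icc (0:ℝ) 1) :=
    measurableSet_Icc.prod measurableSet_Icc
  have key := lsc_core (Set.indicator (Set.Icc (0:ℝ) 1 ×ˢ Set.Icc (0:ℝ) 1) fun z => W z.1 z.2)
    (by
      rw [unif01_prod] at hWi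
      exact (IntegrableOn.integrable_indicator hWi hsq).locallyIntegrable)
    (fun n => Set.indicator (Set.Icc (0:ℝ) 1 ×ˢ Set.Icc (0:ℝ) 1) fun z => U n z.1 z.2)
    (fun n => (hUm n).indicator hsq)
    (by
      intro z ε
      have := hrect (Metric.closedBall z.1 ε) (Metric.closedBall z.2 ε)
        Metric.isClosed_closedBall.measurableSet Metric.isClosed_closedBall.measurableSet
      rw [closedBall_prod_same, unif01_prod] at this
      simp_rw [Measure.restrict_restrict Metric.isClosed_closedBall.measurableSet] at this
      simp_rw [setIntegral_indicator hsq]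
      exact this) r hr C
  have hr0 : 0 < r := by linarith
  have hind : ∀ f : ℝ × ℝ → ℝ, ∫⁻ w, ‖Set.indicator (Set.Icc (0:ℝ) 1 ×ˢ Set.Icc (0:ℝ) 1) f w‖ₑ ^ r
      = ∫⁻ w, ‖f w‖ₑ ^ r ∂(unif01.prod unif01) := by
    intro f
    rw [unif01_prod, ← lintegral_indicator hsq]
    refine lintegral_congr fun w => ?_
    by_cases hw : w ∈ Set.Icc (0:ℝ) 1 ×ˢ Set.Icc (0:ℝ) 1
    · simp only [Set.indicator_of_mem hw]
    · simp only [Set.indicator_of_notMem hw, enorm_zero, ENNReal.zero_rpow_of_pos hr0]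
  simp_rw [hind, hUr] at key
  exact key hC

theorem pair_mp {v : ℕ} (m : Measure ℝ) [IsProbabilityMeasure m] (a b : Fin v) (hab : a ≠ b) :
    MeasurePreserving (fun x : Fin v → ℝ => (x a, x b)) (Measure.pi fun _ => m) (m.prod m) := by
  refine ⟨by fun_prop, ?_⟩
  have h1 : ProbabilityTheory.iIndepFun (fun (i : Fin v) (x : Fin v → ℝ) => x i)
      (Measure.pi fun _ => m) :=
    ProbabilityTheory.iIndepFun_pi (X := fun _ x => x) (fun _ => aemeasurable_id)
  have h2 := (ProbabilityTheory.indepFun_iff_map_prod_eq_prod_map_map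
    (measurable_pi_apply a).aemeasurable (measurable_pi_apply b).aemeasurable).1 (h1.indepFun hab)
  rw [h2]
  have h3 : ∀ c : Fin v, Measure.map (fun x : Fin v → ℝ => x c) (Measure.pi fun _ => m) = m :=
    fun c => (measurePreserving_eval (fun _ => m) c).map_eq
  rw [h3, h3]

theorem edge_bound {v : ℕ} (G : SimpleGraph (Fin v)) [DecidableRel G.Adj]
    (W : ℝ → ℝ → ℝ) (hWmeas : Measurable (Function.uncurry W)) (q : ℝ) (hq : 0 < q)
    (hW : 0 < G.maxDegree →
      ∫⁻ z, ‖W z.1 z.2‖ₑ ^ (q * G.maxDegree) ∂(unif01.prod unif01) ≠ ⊤) :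
    ∫⁻ x : Fin v → ℝ, ‖edgeProd G (fun a b => W (x a) (x b))‖ₑ ^ q
      ∂(Measure.pi fun _ => unif01) ≠ ⊤ := by
  classical
  have hWm : Measurable (fun z : ℝ × ℝ => W z.1 z.2) := hWmeas
  set E := Finset.univ.filter (fun p : Fin v × Fin v => G.Adj p.1 p.2 ∧ p.1 < p.2) with hE
  rcases Nat.eq_zero_or_pos G.maxDegree with h0 | hpos
  · have hemp : E = ∅ := by
      rw [Finset.eq_empty_iff_forall_notMem]
      intro e he
      rw [hE, Finset.mem_filter] at he
      have h1 : 0 < G.degree e.1 := (G.degree_pos_iff_exists_adj e.1).2 ⟨e.2, he.2.1⟩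
      have h2 := G.degree_le_maxDegree e.1
      omega
    simp [edgeProd, ← hE, hemp]
  have hWt := hW hpos
  set d := G.maxDegree with hd
  have hd0 : (d : ℝ) ≠ 0 := by exact_mod_cast hpos.ne'
  let f : Fin v × Fin v → (Fin v → ℝ) → ℝ≥0∞ := fun e x => ‖W (x e.1) (x e.2)‖ₑ ^ (q * d)
  have hf : ∀ e, Measurable (f e) := fun e =>
    (hWm.comp (by fun_prop : Measurable fun x : Fin v → ℝ => (x e.1, x e.2))).enorm.pow_const _
  let dep : Fin v → Finset (Fin v × Fin v) := fun i => E.filter (fun e => e.1 = i ∨ e.2 = i)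
  have hcard : ∀ i, (dep i).card ≤ d := by
    intro i
    refine le_trans ?_ (G.degree_le_maxDegree i)
    rw [← G.card_neighborFinset_eq_degree]
    refine Finset.card_le_card_of_injOn (fun e => if e.1 = i then e.2 else e.1) ?_ ?_
    · intro e he
      simp only [dep, hE, Finset.coe_filter, Finset.mem_filter, Finset.mem_univ, true_and,
        Set.mem_ofPred_eq] at he
      simp only [Finset.mem_coe, SimpleGraph.mem_neighborFinset]
      obtain ⟨⟨hadj, hlt⟩, h | h⟩ := he
      · simp only [h, if_true]; rw [← h]; exact hadj
      · have hne : e.1 ≠ i := by rw [← h]; exact hlt.ne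
        simp only [hne, if_false]; rw [← h]; exact hadj.symm
    · rintro ⟨a, b⟩ he ⟨a', b'⟩ he' heq
      simp only [dep, hE, Finset.coe_filter, Finset.mem_filter, Finset.mem_univ, true_and,
        Set.mem_ofPred_eq] at he he' heq
      obtain ⟨⟨-, h1⟩, h2⟩ := he
      obtain ⟨⟨-, h3⟩, h4⟩ := he'
      grind
  have hfin := finner unif01 E d hpos dep (fun i => Finset.filter_subset _ _) hcard f hf
    (by
      intro i e he hei x y
      have h1 : e.1 ≠ i ∧ e.2 ≠ i := by
        simp only [dep, Finset.mem_filter, not_and, not_or] at hei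
        exact hei he
      simp only [f, Function.update_of_ne h1.1, Function.update_of_ne h1.2]) Finset.univ 0
  simp only [lmarginal_univ] at hfin
  have hlhs : ∀ x : Fin v → ℝ, ‖edgeProd G (fun a b => W (x a) (x b))‖ₑ ^ q =
      ∏ e ∈ E, f e x ^ ((d : ℝ)⁻¹) := by
    intro x
    rw [edgeProd, ← hE, enorm_eq_nnnorm, nnnorm_prod, ENNReal.ofNNReal_finsetProd,
      ← ENNReal.prod_rpow_of_nonneg hq.le]
    refine Finset.prod_congr rfl fun e _ => ?_
    simp only [f]
    rw [← ENNReal.rpow_mul, mul_assoc, mul_inv_cancel₀ hd0, mul_one, enorm_eq_nnnorm]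
  simp_rw [hlhs]
  refine ne_top_of_le_ne_top ?_ hfin
  refine (ENNReal.prod_lt_top fun e he => ?_).ne
  refine ENNReal.rpow_lt_top_of_nonneg (by positivity) ?_
  have hne : e.1 ≠ e.2 := by
    rw [hE, Finset.mem_filter] at he
    exact he.2.2.ne
  have := (pair_mp unif01 e.1 e.2 hne).lintegral_comp
    (f := fun z => ‖W z.1 z.2‖ₑ ^ (q * d)) (hWm.enorm.pow_const _)
  simp only at this
  simp only [f]
  rw [this]
  exact hWt

theorem T_bound {X : Type*} [MeasurableSpace X] {v : ℕ} (G : SimpleGraph (Fin v))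
    [DecidableRel G.Adj] (W : ℝ → ℝ → ℝ) (hWmeas : Measurable (Function.uncurry W))
    (φ : (Fin v → X) → ℝ)
    (ψ : X → ℝ) (hψmeas : Measurable ψ) (hψpos : ∀ x, 0 ≤ ψ x)
    (hdom : ∀ y : Fin v → X, |φ y| ≤ ∏ a, ψ (y a))
    (p q : ℝ) (hpq : p.HolderConjugate q) (ν : Measure (ℝ × X)) (hν : inTM ν)
    (hint : Integrable (fun z : ℝ × X => ψ z.2 ^ p) ν) :
    ‖TWphi G W φ ν‖ₑ ≤ ENNReal.ofReal ((∫ z, ψ z.2 ^ p ∂ν) ^ v) ^ (1 / p) *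
      (∫⁻ x : Fin v → ℝ, ‖edgeProd G (fun a b => W (x a) (x b))‖ₑ ^ q
      ∂(Measure.pi fun _ => unif01)) ^ (1 / q) := by
  have hWm : Measurable (fun z : ℝ × ℝ => W z.1 z.2) := hWmeas
  obtain ⟨hprob, hmarg⟩ := hν
  have hpi : piProb v ν = Measure.pi fun _ : Fin v => ν := by
    simp [piProb, probOr, hprob]
  have hmE : Measurable (fun x : Fin v → ℝ => edgeProd G (fun a b => W (x a) (x b))) := by
    unfold edgeProd
    exact Finset.measurable_prod _ fun e _ =>
      hWm.comp (by fun_prop : Measurable fun x : Fin v → ℝ => (x e.1, x e.2))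
  rw [TWphi, hpi]
  refine (enorm_integral_le_lintegral_enorm _).trans ?_
  have hmp : MeasurePreserving (fun (z : Fin v → ℝ × X) (i : Fin v) => (z i).1)
      (Measure.pi fun _ : Fin v => ν) (Measure.pi fun _ : Fin v => unif01) :=
    measurePreserving_pi (fun _ => ν) (fun _ => unif01) (fun _ => ⟨measurable_fst, hmarg⟩)
  have h1 : ∫⁻ z : Fin v → ℝ × X, (ENNReal.ofReal (∏ a, ψ (z a).2)) ^ p
      ∂(Measure.pi fun _ : Fin v => ν) = ENNReal.ofReal ((∫ z, ψ z.2 ^ p ∂ν) ^ v) := by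
    have e1 : ∀ z : Fin v → ℝ × X, (ENNReal.ofReal (∏ a, ψ (z a).2)) ^ p =
        ENNReal.ofReal (∏ a, ψ (z a).2 ^ p) := by
      intro z
      rw [ENNReal.ofReal_rpow_of_nonneg (Finset.prod_nonneg fun a _ => hψpos _) hpq.nonneg,
        Real.finsetProd_rpow _ _ (fun a _ => hψpos _)]
    simp_rw [e1]
    rw [← ofReal_integral_eq_lintegral_ofReal]
    · rw [integral_fintype_prod_eq_prod (fun (_ : Fin v) (z : ℝ × X) => ψ z.2 ^ p)]
      simp
    · exact Integrable.fintype_prod (f := fun (_ : Fin v) (z : ℝ × X) => ψ z.2 ^ p)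
        (fun _ => hint)
    · exact Eventually.of_forall fun z =>
        Finset.prod_nonneg fun a _ => Real.rpow_nonneg (hψpos _) _
  have h2 := hmp.lintegral_comp (f := fun x : Fin v → ℝ =>
    ‖edgeProd G (fun a b => W (x a) (x b))‖ₑ ^ q) (hmE.enorm.pow_const _)
  simp only at h2
  rw [← h1, ← h2]
  refine le_trans ?_ (ENNReal.lintegral_mul_le_Lp_mul_Lq _ hpq
    (f := fun z : Fin v → ℝ × X => ENNReal.ofReal (∏ a, ψ (z a).2))
    (g := fun z : Fin v → ℝ × X => ‖edgeProd G (fun a b => W (z a).1 (z b).1)‖ₑ) ?_ ?_)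
  · refine lintegral_mono fun z => ?_
    rw [enorm_mul]
    simp only [Pi.mul_apply]
    gcongr
    rw [Real.enorm_eq_ofReal_abs]
    exact ENNReal.ofReal_le_ofReal (hdom _)
  · exact (Finset.measurable_prod _ fun a _ =>
      hψmeas.comp (by fun_prop : Measurable fun z : Fin v → ℝ × X => (z a).2)).ennreal_ofReal.aemeasurable
  · exact (hmE.comp hmp.measurable).enorm.aemeasurable

theorem Zset_bdd {X : Type*} [MeasurableSpace X] (μ : Measure X) [IsProbabilityMeasure μ]
    {v : ℕ} (G : SimpleGraph (Fin v))
    [DecidableRel G.Adj] (W : ℝ → ℝ → ℝ) (hWmeas : Measurable (Function.uncurry W))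
    (φ : (Fin v → X) → ℝ)
    (ψ : X → ℝ) (hψmeas : Measurable ψ) (hψpos : ∀ x, 0 ≤ ψ x)
    (hdom : ∀ y : Fin v → X, |φ y| ≤ ∏ a, ψ (y a))
    (p q : ℝ) (hpq : p.HolderConjugate q) (hvp : (v : ℝ) ≤ p)
    (htail : ∀ lam : ℝ, 0 < lam → ∫⁻ x, ENNReal.ofReal (Real.exp (lam * ψ x ^ p)) ∂μ < ⊤)
    (hB : ∫⁻ x : Fin v → ℝ, ‖edgeProd G (fun a b => W (x a) (x b))‖ₑ ^ q
      ∂(Measure.pi fun _ => unif01) ≠ ⊤) (θ : ℝ) : BddAbove (Zset G W φ μ θ) := by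
  set B := ∫⁻ x : Fin v → ℝ, ‖edgeProd G (fun a b => W (x a) (x b))‖ₑ ^ q
      ∂(Measure.pi fun _ => unif01)
  set C := (B ^ (1 / q)).toReal with hCdef
  have hC0 : 0 ≤ C := ENNReal.toReal_nonneg
  have hp0 := hpq.pos
  have hBq : B ^ (1 / q) ≠ ⊤ :=
    (ENNReal.rpow_lt_top_of_nonneg (one_div_nonneg.2 hpq.symm.nonneg) hB).ne
  set lam := |θ| * C + 1
  have hlam : 0 < lam := by positivity
  set M := ∫ z : ℝ × X, Real.exp (lam * ψ z.2 ^ p) ∂(unif01.prod μ)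
  refine ⟨|θ| * C + M, ?_⟩
  rintro _ ⟨ν, hν, hKL, rfl⟩
  have hprob : IsProbabilityMeasure ν := hν.1
  have hmψ : Measurable (fun z : ℝ × X => ψ z.2 ^ p) :=
    (hψmeas.comp measurable_snd).pow_const _
  have hexpμ : Integrable (fun x => Real.exp (lam * ψ x ^ p)) μ := by
    refine ⟨(((hψmeas.pow_const _).const_mul _).exp).aestronglyMeasurable, ?_⟩
    rw [hasFiniteIntegral_iff_ofReal (Eventually.of_forall fun _ => (Real.exp_pos _).le)]
    exact htail lam hlam
  have hexp : Integrable (fun z : ℝ × X => Real.exp (lam * ψ z.2 ^ p)) (unif01.prod μ) :=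
    hexpμ.comp_snd unif01
  obtain ⟨hi, hle⟩ := dv_bound ν (unif01.prod μ) hKL (fun z => lam * ψ z.2 ^ p)
    (hmψ.const_mul _) (fun z => mul_nonneg hlam.le (Real.rpow_nonneg (hψpos _) _)) hexp
  have hint : Integrable (fun z : ℝ × X => ψ z.2 ^ p) ν :=
    (integrable_const_mul_iff (IsUnit.mk0 _ hlam.ne') _).1 hi
  rw [integral_const_mul] at hle
  set K := ∫ z, ψ z.2 ^ p ∂ν with hK
  have hK0 : 0 ≤ K := integral_nonneg fun z => Real.rpow_nonneg (hψpos _) _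
  have hT := T_bound G W hWmeas φ ψ hψmeas hψpos hdom p q hpq ν hν hint
  have hKp : (K ^ v) ^ (1 / p) ≤ 1 + K := by
    rw [← Real.rpow_natCast, ← Real.rpow_mul hK0]
    have hle1 : (v : ℝ) * (1 / p) ≤ 1 := by
      rw [mul_one_div, div_le_one hp0]; exact hvp
    have h0 : 0 ≤ (v : ℝ) * (1 / p) := by positivity
    calc K ^ ((v : ℝ) * (1 / p)) ≤ (1 + K) ^ ((v : ℝ) * (1 / p)) :=
          Real.rpow_le_rpow hK0 (by linarith) h0
      _ ≤ (1 + K) ^ (1 : ℝ) := Real.rpow_le_rpow_of_exponent_le (by linarith) hle1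
      _ = 1 + K := Real.rpow_one _
  have hTabs : |TWphi G W φ ν| ≤ (1 + K) * C := by
    have h1 : |TWphi G W φ ν| = (‖TWphi G W φ ν‖ₑ).toReal := by simp
    rw [h1]
    refine (ENNReal.toReal_mono ?_ hT).trans ?_
    · exact ENNReal.mul_ne_top
        (ENNReal.rpow_lt_top_of_nonneg (by positivity) ENNReal.ofReal_ne_top).ne hBq
    · rw [ENNReal.toReal_mul, ← ENNReal.toReal_rpow, ENNReal.toReal_ofReal (by positivity)]
      gcongr
  have h2 : θ * TWphi G W φ ν ≤ |θ| * ((1 + K) * C) := by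
    refine (le_abs_self _).trans ?_
    rw [abs_mul]
    gcongr
  have h3 : |θ| * C * K ≤ lam * K := by
    gcongr
    simp [lam]
  have h4 : |θ| * ((1 + K) * C) = |θ| * C + |θ| * C * K := by ring
  change lam * K ≤ _ + M at hle
  linarith

theorem exists_exponents {X : Type*} [MeasurableSpace X] (μ : Measure X) [IsProbabilityMeasure μ]
    {v : ℕ} (hv : 2 ≤ v) (ψ : X → ℝ) (hψpos : ∀ x, 0 ≤ ψ x)
    (p : ℝ≥0∞) (hpv : (v : ℝ≥0∞) ≤ p) (hTail : TailCond μ ψ p)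
    (q : ℝ≥0∞) (hq : 1 < q) (hpq : p⁻¹ + q⁻¹ ≤ 1) :
    ∃ p' q' : ℝ, p'.HolderConjugate q' ∧ (v : ℝ) ≤ p' ∧ ENNReal.ofReal q' ≤ q ∧
      ∀ lam : ℝ, 0 < lam → ∫⁻ x, ENNReal.ofReal (Real.exp (lam * ψ x ^ p')) ∂μ < ⊤ := by
  have hfin : ∃ p' : ℝ, (v : ℝ) ≤ p' ∧ (ENNReal.ofReal p')⁻¹ + q⁻¹ ≤ 1 ∧
      ∀ lam : ℝ, 0 < lam → ∫⁻ x, ENNReal.ofReal (Real.exp (lam * ψ x ^ p')) ∂μ < ⊤ := by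
    by_cases hp : p = ⊤
    · rw [TailCond, if_pos hp] at hTail
      obtain ⟨C, hC⟩ := hTail
      have hq1 : q⁻¹ < 1 := ENNReal.inv_lt_one.2 hq
      obtain ⟨N, hN⟩ := ENNReal.exists_inv_nat_lt (tsub_pos_of_lt hq1).ne'
      refine ⟨(max N v : ℕ), by exact_mod_cast le_max_right _ _, ?_, ?_⟩
      · rw [ENNReal.ofReal_natCast]
        have h1 : (((max N v : ℕ) : ℝ≥0∞))⁻¹ ≤ 1 - q⁻¹ := by
          refine le_trans ?_ hN.le
          exact ENNReal.inv_le_inv.2 (by exact_mod_cast le_max_left _ _)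
        calc _ ≤ (1 - q⁻¹) + q⁻¹ := by gcongr
          _ = 1 := tsub_add_cancel_of_le hq1.le
      · intro lam hlam
        refine lt_of_le_of_lt (lintegral_mono (g := fun _ =>
          ENNReal.ofReal (Real.exp (lam * C ^ ((max N v : ℕ) : ℝ)))) fun x => ?_) ?_
        · refine ENNReal.ofReal_le_ofReal (Real.exp_le_exp.2 ?_)
          gcongr
          · exact hψpos x
          · exact hC x
        · simp
    · rw [TailCond, if_neg hp] at hTail
      refine ⟨p.toReal, ?_, by rwa [ENNReal.ofReal_toReal hp], hTail⟩
      have := ENNReal.toReal_mono hp hpv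
      simpa using this
  obtain ⟨p', hvp, hpq', ht⟩ := hfin
  have hp1 : 1 < p' := by
    have : (2 : ℝ) ≤ v := by exact_mod_cast hv
    linarith
  have hconj : p'.HolderConjugate p'.conjExponent := Real.HolderConjugate.conjExponent hp1
  refine ⟨p', p'.conjExponent, hconj, hvp, ?_, ht⟩
  rw [← ENNReal.inv_le_inv, ← ENNReal.ofReal_inv_of_pos hconj.symm.pos,
    ← hconj.one_sub_inv, ENNReal.ofReal_sub _ (inv_nonneg.2 hconj.nonneg), ENNReal.ofReal_one,
    ENNReal.ofReal_inv_of_pos hconj.pos]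
  refine ENNReal.le_sub_of_add_le_left ?_ hpq'
  simp [hconj.pos]

theorem W_norm {v : ℕ} (G : SimpleGraph (Fin v)) [DecidableRel G.Adj]
    (Q : ∀ n : ℕ, Fin n → Fin n → ℝ)
    (W : ℝ → ℝ → ℝ) (hWmeas : Measurable (Function.uncurry W)) (hWL1 : kerNorm W 1 ≠ ⊤)
    (hcut : Tendsto (fun n => weakCutDist (stepKernel n (Q n)) W) atTop (nhds 0))
    (q : ℝ≥0∞) (q' : ℝ) (hq1 : 1 < q') (hqq : ENNReal.ofReal q' ≤ q)
    (hnorm : Filter.atTop.limsup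
        (fun n => kerNorm (stepKernel n (Q n)) (q * (G.maxDegree : ℝ≥0∞))) ≠ ⊤)
    (hd : 0 < G.maxDegree) :
    ∫⁻ z, ‖W z.1 z.2‖ₑ ^ (q' * G.maxDegree) ∂(unif01.prod unif01) ≠ ⊤ := by
  obtain ⟨C, hC1, hC2⟩ := exists_between (lt_top_iff_ne_top.2 hnorm)
  have hev := eventually_lt_of_limsup_lt hC1
  have hd1 : (1 : ℝ) ≤ G.maxDegree := by exact_mod_cast hd
  have hr1 : 1 ≤ q' * G.maxDegree := by nlinarith
  have hr0 : 0 < q' * G.maxDegree := by linarith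
  refine ne_top_of_le_ne_top ?_ (kerNorm_lsc Q W hWmeas hWL1 hcut (q' * G.maxDegree) hr1
    (C ^ (q' * G.maxDegree)) ?_)
  · exact (ENNReal.rpow_lt_top_of_nonneg hr0.le hC2.ne).ne
  · filter_upwards [hev] with n hn
    have h1 : kerNorm (stepKernel n (Q n)) (ENNReal.ofReal (q' * G.maxDegree)) ≤
        kerNorm (stepKernel n (Q n)) (q * (G.maxDegree : ℝ≥0∞)) := by
      refine eLpNorm_le_eLpNorm_of_exponent_le ?_
        (measurable_stepKernel n (Q n)).aestronglyMeasurable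
      rw [ENNReal.ofReal_mul (by linarith), ENNReal.ofReal_natCast]
      gcongr
    have h2 := h1.trans hn.le
    rw [kerNorm, eLpNorm_eq_lintegral_rpow_enorm_toReal (by simpa using hr0)
      ENNReal.ofReal_ne_top, ENNReal.toReal_ofReal hr0.le] at h2
    have h3 := ENNReal.rpow_le_rpow h2 hr0.le
    rwa [← ENNReal.rpow_mul, one_div, inv_mul_cancel₀ hr0.ne', ENNReal.rpow_one] at h3


/-- Lemma 1.1 (ii): constrained minimizers coincide with `F_θ`. -/
theorem constrained_minimizers_eq_Fset
    {X : Type*} [MeasurableSpace X] [TopologicalSpace X] [PolishSpace X] [BorelSpace X]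
    (μ : Measure X) [IsProbabilityMeasure μ]
    (hnondeg : ∀ x : X, μ ≠ Measure.dirac x)
    {v : ℕ} (hv : 2 ≤ v) (G : SimpleGraph (Fin v)) [DecidableRel G.Adj]
    (φ : (Fin v → X) → ℝ) (hφ : Measurable φ)
    (Q : ∀ n : ℕ, Fin n → Fin n → ℝ)
    (hQsymm : ∀ n i j, Q n i j = Q n j i) (hQzero : ∀ n i, Q n i i = 0)
    (W : ℝ → ℝ → ℝ) (hWmeas : Measurable (Function.uncurry W))
    (hWsymm : ∀ x y, W x y = W y x) (hWL1 : kerNorm W 1 ≠ ⊤)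
    (hcut : Tendsto (fun n => weakCutDist (stepKernel n (Q n)) W) atTop (nhds 0))
    (ψ : X → ℝ) (hψmeas : Measurable ψ) (hψpos : ∀ x, 0 ≤ ψ x)
    (p : ℝ≥0∞) (hpv : (v : ℝ≥0∞) ≤ p) (hTail : TailCond μ ψ p)
    (hdom : ∀ y : Fin v → X, |φ y| ≤ ∏ a, ψ (y a))
    (q : ℝ≥0∞) (hq : 1 < q) (hpq : p⁻¹ + q⁻¹ ≤ 1)
    (hnorm : Filter.atTop.limsup
        (fun n => kerNorm (stepKernel n (Q n)) (q * (G.maxDegree : ℝ≥0∞))) ≠ ⊤)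
    (θ t₀ t : ℝ)
    (hsingle : {s : ℝ | ∃ ν ∈ Fset G W φ μ θ, TWphi G W φ ν = s} = {t₀})
    (hdiff : DifferentiableAt ℝ (Zfun G W φ μ) θ)
    (ht : t = deriv (Zfun G W φ μ) θ) :
    {ν : Measure (ℝ × X) | inTM ν ∧ KLdiv ν (unif01.prod μ) ≠ ⊤ ∧
        TWphi G W φ ν = t ∧
        ∀ σ : Measure (ℝ × X), inTM σ → KLdiv σ (unif01.prod μ) ≠ ⊤ →
          TWphi G W φ σ = t → KLdiv ν (unif01.prod μ) ≤ KLdiv σ (unif01.prod μ)} =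
      Fset G W φ μ θ := by
  have hbdd : ∀ θ', BddAbove (Zset G W φ μ θ') := by
    obtain ⟨p', q', hconj, hvp, hqq, ht'⟩ :=
      exists_exponents μ hv ψ hψpos p hpv hTail q hq hpq
    have hB := edge_bound G W hWmeas q' hconj.symm.pos
      (W_norm G Q W hWmeas hWL1 hcut q q' hconj.symm.lt hqq hnorm)
    exact Zset_bdd μ G W hWmeas φ ψ hψmeas hψpos hdom p' q' hconj hvp ht' hB
  have hall : ∀ ν ∈ Fset G W φ μ θ, TWphi G W φ ν = t₀ := by
    intro ν hν
    have : TWphi G W φ ν ∈ {s : ℝ | ∃ ν ∈ Fset G W φ μ θ, TWphi G W φ ν = s} := ⟨ν, hν, rfl⟩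
    rw [hsingle] at this
    exact this
  obtain ⟨ν₀, hν₀, hT₀⟩ : ∃ ν ∈ Fset G W φ μ θ, TWphi G W φ ν = t₀ := by
    have : t₀ ∈ {s : ℝ | ∃ ν ∈ Fset G W φ μ θ, TWphi G W φ ν = s} := by
      rw [hsingle]; rfl
    exact this
  have hmem : ∀ θ', θ' * t₀ - (KLdiv ν₀ (unif01.prod μ)).toReal ∈ Zset G W φ μ θ' :=
    fun θ' => ⟨ν₀, hν₀.1, hν₀.2.1, by rw [hT₀]⟩
  have hZθ : Zfun G W φ μ θ ≤ θ * t₀ - (KLdiv ν₀ (unif01.prod μ)).toReal := by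
    refine csSup_le ⟨_, hmem θ⟩ ?_
    rintro _ ⟨σ, h1, h2, rfl⟩
    rw [← hT₀]
    exact hν₀.2.2 σ h1 h2
  have htt : t = t₀ := by
    have hmin : IsLocalMin (fun θ' => Zfun G W φ μ θ' - θ' * t₀) θ := by
      refine Eventually.of_forall fun θ' => ?_
      have h1 : θ' * t₀ - (KLdiv ν₀ (unif01.prod μ)).toReal ≤ Zfun G W φ μ θ' :=
        le_csSup (hbdd θ') (hmem θ')
      simp only
      linarith
    have hder : HasDerivAt (fun θ' => Zfun G W φ μ θ' - θ' * t₀)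
        (deriv (Zfun G W φ μ) θ - 1 * t₀) θ :=
      hdiff.hasDerivAt.sub ((hasDerivAt_id θ).mul_const t₀)
    have := hmin.hasDerivAt_eq_zero hder
    rw [ht]
    linarith
  subst htt
  ext ν
  constructor
  · rintro ⟨h1, h2, h3, h4⟩
    refine ⟨h1, h2, fun σ hσ1 hσ2 => (hν₀.2.2 σ hσ1 hσ2).trans ?_⟩
    have h5 := ENNReal.toReal_mono hν₀.2.1 (h4 ν₀ hν₀.1 hν₀.2.1 hT₀)
    rw [hT₀, h3]
    linarith
  · intro hν
    refine ⟨hν.1, hν.2.1, hall ν hν, fun σ hσ1 hσ2 hσ3 => ?_⟩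
    have h5 := hν.2.2 σ hσ1 hσ2
    rw [hall ν hν, hσ3] at h5
    exact (ENNReal.toReal_le_toReal hν.2.1 hσ2).1 (by linarith)
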